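/- arXiv:1107.2735 — 2 statements merged into one kernel-verified Lean document; each statement's English description precedes it below -/
import Mathlib

section
/- Let n ≥ 3 be an integer, let η > 0, and let m, α, β satisfy 0 < m ≤ (n−2)/n, β > 0, and α ≤ β·(n−2)/m. Then there exists a unique radial solution v of (E) on [0,∞). Moreover, if α ≠ 0 then, with k = β/α, the function w₁(r) = r²·v(r)^{2k} satisfies w₁'(r) > 0 for all r > 0. -/
open Real Set

/-- `v` is a radial solution of the elliptic equation
`((n-1)/m)·((v^m)'' + ((n-1)/r)(v^m)') + α v + β r v' = 0` on `[0, ∞)`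
with `v > 0`, `v(0) = η`, `v'(0) = 0`. -/
def IsRadialSol (n : ℕ) (m α β η : ℝ) (v : ℝ → ℝ) : Prop :=
  (∀ r ∈ Set.Ici (0:ℝ), 0 < v r) ∧
  ContinuousOn v (Set.Ici (0:ℝ)) ∧
  ContDiffOn ℝ 2 v (Set.Ioi (0:ℝ)) ∧
  HasDerivWithinAt v 0 (Set.Ici (0:ℝ)) 0 ∧
  v 0 = η ∧
  ∀ r ∈ Set.Ioi (0:ℝ),
    (((n : ℝ) - 1) / m) * (deriv (deriv (fun s => v s ^ m)) r
      + (((n : ℝ) - 1) / r) * deriv (fun s => v s ^ m) r)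
    + α * v r + β * r * deriv v r = 0

/-!
With `u = v ^ m` and `p = 1 / m`, the equation integrates to `u = η ^ m - potential of u ^ p`. When
`x ^ p` is replaced by a Lipschitz function, the right-hand side is a contraction in a norm with
weight `exp (-K * r ^ 2)`. This gives uniqueness, local existence, and existence as long as `u`
stays in a compact subset of `(0, ∞)`.

Constants solve the equation if `α = 0`. Otherwise the a priori bounds come from
`Z = α u + β p r u'`, the derivative of `u` along the scaling that fixes `r ^ (-α / (β p))`. The
product `α Z` starts at `α ^ 2 u(0) > 0` and, exactly because `α ≤ β p (n - 2)`, solves a linear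
first order equation with nonnegative forcing, so it stays positive. Hence `α u` decreases while
`α r ^ (α / (β p)) u` increases, which bounds `u` above and away from zero on compact intervals, and
`u` is global. Positivity of `α Z` is also the monotonicity of `r ^ 2 * v ^ (2 * β / α)`.
-/

open Filter Topology
open scoped NNReal

section Calculus

variable {a b : ℝ}

lemma mapsTo_Icc_of_forall_mapsTo_Ico {X : Type*} [TopologicalSpace X] {f : ℝ → X} {U : Set X}
    (hf : ContinuousOn f (Icc a b)) (hU : IsOpen U)
    (h : ∀ x ∈ Icc a b, MapsTo f (Ico a x) U → f x ∈ U) : MapsTo f (Icc a b) U := by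
  by_contra hfU
  obtain ⟨x, hx, hxU⟩ : ∃ x ∈ Icc a b, f x ∉ U := by simpa [MapsTo, and_assoc] using hfU
  have hcompact : IsCompact (Icc a b ∩ f ⁻¹' Uᶜ) :=
    isCompact_Icc.of_isClosed_subset
      (hf.preimage_isClosed_of_isClosed isClosed_Icc hU.isClosed_compl) inter_subset_left
  obtain ⟨y, ⟨hy, hyU⟩, hmin⟩ := hcompact.exists_isLeast ⟨x, hx, hxU⟩
  exact hyU <| h y hy fun z hz => by_contra fun hzU =>
    (hmin ⟨⟨hz.1, hz.2.le.trans hy.2⟩, hzU⟩).not_gt hz.2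

lemma exists_subset_Ioo_of_isCompact_of_subset_Ioi {K : Set ℝ} {l : ℝ} (hK : IsCompact K)
    (hKl : K ⊆ Ioi l) : ∃ δ M, l < δ ∧ K ⊆ Ioo δ M := by
  obtain rfl | hne := K.eq_empty_or_nonempty
  · exact ⟨l + 1, 0, lt_add_one l, empty_subset _⟩
  · obtain ⟨x, hxK, hx⟩ := hK.exists_isLeast hne
    obtain ⟨y, -, hy⟩ := hK.exists_isGreatest hne
    obtain ⟨δ, hlδ, hδx⟩ := exists_between (mem_Ioi.1 (hKl hxK))
    exact ⟨δ, y + 1, hlδ, fun z hz => ⟨hδx.trans_le (hx hz), (hy hz).trans_lt (lt_add_one y)⟩⟩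

-- `exp (∫ q) * W` is nondecreasing.
lemma pos_of_deriv_add_mul_nonneg {W W' q : ℝ → ℝ} (hab : a ≤ b)
    (hW : ContinuousOn W (Icc a b)) (hq : ContinuousOn q (Icc a b))
    (hd : ∀ x ∈ Ioo a b, HasDerivAt W (W' x) x) (h : ∀ x ∈ Ioo a b, 0 ≤ W' x + q x * W x)
    (ha : 0 < W a) : 0 < W b := by
  set q' : ℝ → ℝ := IccExtend hab ((Icc a b).domRestrict q)
  have hq' : Continuous q' := hq.domRestrict.Icc_extend'
  have hQ (x : ℝ) : HasDerivAt (fun y => ∫ t in a..y, q' t) (q' x) x :=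
    (hq'.integral_hasStrictDerivAt a x).hasDerivAt
  have : Continuous fun y => ∫ t in a..y, q' t :=
    continuous_iff_continuousAt.2 fun x => (hQ x).continuousAt
  have hmono : MonotoneOn (fun x => exp (∫ t in a..x, q' t) * W x) (Icc a b) := by
    refine monotoneOn_of_hasDerivWithinAt_nonneg (convex_Icc a b) (by fun_prop)
      (f' := fun x => exp (∫ t in a..x, q' t) * (W' x + q x * W x)) (fun x hx => ?_) fun x hx => ?_
    · rw [interior_Icc] at hx
      have hq'x : q' x = q x := IccExtend_of_mem hab _ (Ioo_subset_Icc_self hx)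
      refine (((hQ x).exp.mul (hd x hx)).congr_deriv ?_).hasDerivWithinAt
      rw [hq'x]
      ring
    · rw [interior_Icc] at hx
      exact mul_nonneg (exp_pos _).le (h x hx)
  have hle := hmono (left_mem_Icc.2 hab) (right_mem_Icc.2 hab) hab
  exact pos_of_mul_pos_right ((mul_pos (exp_pos _) ha).trans_le hle) (exp_pos _).le

lemma exists_lipschitzWith_eqOn_rpow (p : ℝ) (ha : 0 < a) :
    ∃ (L : ℝ≥0) (f : ℝ → ℝ), LipschitzWith L f ∧ EqOn (fun x => x ^ p) f (Icc a b) := by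
  have hsmooth : ContDiffOn ℝ 1 (fun x : ℝ => x ^ p) (Icc a b) :=
    contDiffOn_id.rpow_const_of_ne fun x hx => (ha.trans_le hx.1).ne'
  obtain ⟨L, hL⟩ := hsmooth.exists_lipschitzOnWith one_ne_zero (convex_Icc a b) isCompact_Icc
  exact ⟨L, hL.extend_real⟩

-- By the mean value theorem `ξ * w' ξ` is small for some `ξ` arbitrarily close to `0`.
lemma eq_zero_of_tendsto_pow_mul_deriv {w w' : ℝ → ℝ} {N : ℕ} {C : ℝ} (hN : N ≠ 0)
    (hw : ContinuousOn w (Ici 0)) (hd : ∀ r, 0 < r → HasDerivAt w (w' r) r)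
    (h : Tendsto (fun r => r ^ N * w' r) (𝓝[>] 0) (𝓝 C)) : C = 0 := by
  have hslope (r : ℝ) (hr : 0 < r) : ∃ ξ ∈ Ioo 0 r, w' ξ = (w r - w 0) / (r - 0) :=
    exists_hasDerivAt_eq_slope w w' hr (hw.mono Icc_subset_Ici_self) fun x hx => hd x hx.1
  choose! ξ hξ hξw using hslope
  have hξ_tendsto : Tendsto ξ (𝓝[>] 0) (𝓝[>] 0) := by
    refine tendsto_nhdsWithin_iff.2
      ⟨tendsto_of_tendsto_of_tendsto_of_le_of_le' tendsto_const_nhds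
        (tendsto_id.mono_left nhdsWithin_le_nhds) ?_ ?_, ?_⟩
    all_goals filter_upwards [self_mem_nhdsWithin] with r hr
    exacts [(hξ r hr).1.le, (hξ r hr).2.le, (hξ r hr).1]
  have hbound : ∀ᶠ r in 𝓝[>] 0, ‖ξ r ^ N * w' (ξ r)‖ ≤ |w r - w 0| := by
    filter_upwards [Ioo_mem_nhdsGT one_pos] with r hr
    obtain ⟨hξ0, hξr⟩ := hξ r hr.1
    have hpow : ξ r ^ N ≤ r :=
      (pow_le_of_le_one hξ0.le (hξr.trans hr.2).le hN).trans hξr.le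
    rw [hξw r hr.1, sub_zero, norm_mul, norm_div, norm_pow, norm_of_nonneg hξ0.le,
      norm_of_nonneg hr.1.le]
    calc ξ r ^ N * (|w r - w 0| / r) ≤ r * (|w r - w 0| / r) := by
          gcongr
          exact div_nonneg (abs_nonneg _) hr.1.le
      _ = |w r - w 0| := mul_div_cancel₀ _ hr.1.ne'
  have hw0 : Tendsto (fun r => |w r - w 0|) (𝓝[>] 0) (𝓝 0) := by
    have := (((hw 0 self_mem_Ici).mono Ioi_subset_Ici_self).tendsto.sub_const (w 0)).abs
    simpa using this
  exact tendsto_nhds_unique (h.comp hξ_tendsto) (squeeze_zero_norm' hbound hw0)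

lemma exists_continuous_eqOn_Ico {U : ℕ → ℝ → ℝ} (hU : ∀ N, Continuous (U N))
    (hcompat : ∀ N N', N ≤ N' → EqOn (U N) (U N') (Ico 0 N)) :
    ∃ u : ℝ → ℝ, Continuous u ∧ ∀ N : ℕ, EqOn u (U N) (Ico 0 N) := by
  let S (N : ℕ) : Set ℝ := {x | |x| < N}
  let φ (N : ℕ) : C(S N, ℝ) := ⟨fun x => U N |x|, by have := hU N; fun_prop⟩
  have hφ (N N' : ℕ) (x : ℝ) (hx : x ∈ S N) (hx' : x ∈ S N') : φ N ⟨x, hx⟩ = φ N' ⟨x, hx'⟩ := by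
    rcases le_total N N' with hN | hN
    · exact hcompat N N' hN ⟨abs_nonneg x, hx⟩
    · exact (hcompat N' N hN ⟨abs_nonneg x, hx'⟩).symm
  have hS (x : ℝ) : ∃ N, S N ∈ 𝓝 x := by
    obtain ⟨N, hN⟩ := exists_nat_gt |x|
    exact ⟨N, (isOpen_lt continuous_abs continuous_const).mem_nhds hN⟩
  refine ⟨ContinuousMap.liftCover S φ hφ hS, map_continuous _, fun N x hx => ?_⟩
  have hxS : x ∈ S N := by simpa only [S, mem_ofPred_eq, abs_of_nonneg hx.1] using hx.2
  refine (ContinuousMap.liftCover_coe (⟨x, hxS⟩ : S N)).trans ?_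
  simp only [φ, ContinuousMap.coe_mk, abs_of_nonneg hx.1]

end Calculus

/-- `s⁻ⁿ ∫₀ˢ xⁿ⁻¹ g(x) dx`, i.e. `1 / n` times the mean over the ball of radius `s` of the radial
function with profile `g`, rescaled to the unit interval so that it also makes sense at `s = 0`. -/
noncomputable def radialMean (n : ℕ) (g : ℝ → ℝ) (s : ℝ) : ℝ :=
  ∫ t in (0 : ℝ)..1, t ^ (n - 1) * g (t * s)

/-- `s¹⁻ⁿ ∫₀ˢ xⁿ⁻¹ (α g + β x g') dx`, written after an integration by parts so that it makes sense
for merely continuous `g`. It is the flux through which the equation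
`w'' + (n - 1) / r w' + α g + β r g' = 0` with `w` continuous at `0` integrates to
`w' = -radialFlux n α β g`. -/
noncomputable def radialFlux (n : ℕ) (α β : ℝ) (g : ℝ → ℝ) (s : ℝ) : ℝ :=
  s * (β * g s + (α - n * β) * radialMean n g s)

/-- The primitive of the flux, so that the radial equation reads
`w r = w 0 - radialPotential n α β g r`. -/
noncomputable def radialPotential (n : ℕ) (α β : ℝ) (g : ℝ → ℝ) (r : ℝ) : ℝ :=
  ∫ s in (0 : ℝ)..r, radialFlux n α β g s

section RadialOperators

variable {n : ℕ} {α β : ℝ} {g g₁ g₂ : ℝ → ℝ} {r s : ℝ}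

@[fun_prop]
lemma continuous_radialMean (hg : Continuous g) : Continuous (radialMean n g) := by
  refine intervalIntegral.continuous_parametric_intervalIntegral_of_continuous' ?_ 0 1
  simp only [Function.uncurry_def]
  fun_prop

@[fun_prop]
lemma continuous_radialFlux (hg : Continuous g) : Continuous (radialFlux n α β g) := by
  unfold radialFlux
  fun_prop

lemma radialMean_congr (hs : 0 ≤ s) (h : EqOn g₁ g₂ (Icc 0 s)) :
    radialMean n g₁ s = radialMean n g₂ s := by
  refine intervalIntegral.integral_congr fun t ht => ?_
  rw [uIcc_of_le zero_le_one] at ht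
  simp only [h ⟨mul_nonneg ht.1 hs, mul_le_of_le_one_left hs ht.2⟩]

lemma radialPotential_congr (hr : 0 ≤ r) (h : EqOn g₁ g₂ (Icc 0 r)) :
    radialPotential n α β g₁ r = radialPotential n α β g₂ r := by
  refine intervalIntegral.integral_congr fun s hs => ?_
  rw [uIcc_of_le hr] at hs
  simp only [radialFlux, h hs, radialMean_congr hs.1 (h.mono (Icc_subset_Icc_right hs.2))]

@[simp]
lemma radialFlux_zero : radialFlux n α β g 0 = 0 := by simp [radialFlux]

@[simp]
lemma radialPotential_zero : radialPotential n α β g 0 = 0 := by simp [radialPotential]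

lemma radialFlux_const (hn : n ≠ 0) (c : ℝ) :
    radialFlux n α β (fun _ => c) s = α / n * c * s := by
  have hcast : ((n - 1 : ℕ) : ℝ) + 1 = n := by
    rw [Nat.cast_sub (Nat.one_le_iff_ne_zero.2 hn), Nat.cast_one, sub_add_cancel]
  have hmean : radialMean n (fun _ => c) s = c / n := by
    simp only [radialMean, intervalIntegral.integral_mul_const, integral_pow, hcast, one_pow,
      Nat.sub_add_cancel (Nat.one_le_iff_ne_zero.2 hn), zero_pow hn, sub_zero]
    ring
  have hn' : (n : ℝ) ≠ 0 := Nat.cast_ne_zero.2 hn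
  rw [radialFlux, hmean]
  field_simp
  ring

lemma hasDerivAt_radialPotential (hg : Continuous g) (r : ℝ) :
    HasDerivAt (radialPotential n α β g) (radialFlux n α β g r) r :=
  ((continuous_radialFlux hg).integral_hasStrictDerivAt 0 r).hasDerivAt

@[fun_prop]
lemma continuous_radialPotential (hg : Continuous g) : Continuous (radialPotential n α β g) :=
  continuous_iff_continuousAt.2 fun r => (hasDerivAt_radialPotential hg r).continuousAt

lemma radialPotential_sub (hg₁ : Continuous g₁) (hg₂ : Continuous g₂) (r : ℝ) :
    radialPotential n α β (fun s => g₁ s - g₂ s) r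
      = radialPotential n α β g₁ r - radialPotential n α β g₂ r := by
  have hmean (s : ℝ) :
      radialMean n (fun s => g₁ s - g₂ s) s = radialMean n g₁ s - radialMean n g₂ s := by
    simp only [radialMean, mul_sub]
    exact intervalIntegral.integral_sub (Continuous.intervalIntegrable (by fun_prop) _ _)
      (Continuous.intervalIntegrable (by fun_prop) _ _)
  have hflux : radialFlux n α β (fun s => g₁ s - g₂ s)
      = fun s => radialFlux n α β g₁ s - radialFlux n α β g₂ s := by
    funext s
    simp only [radialFlux, hmean]
    ring
  simp only [radialPotential, hflux]
  exact intervalIntegral.integral_sub ((continuous_radialFlux hg₁).intervalIntegrable _ _)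
    ((continuous_radialFlux hg₂).intervalIntegrable _ _)

lemma abs_radialMean_le {B : ℝ} (hs : 0 ≤ s) (h : ∀ x ∈ Icc 0 s, |g x| ≤ B) :
    |radialMean n g s| ≤ B := by
  have hbound : ∀ t ∈ uIoc (0 : ℝ) 1, ‖t ^ (n - 1) * g (t * s)‖ ≤ B := fun t ht => by
    rw [uIoc_of_le zero_le_one] at ht
    rw [norm_mul, norm_pow, norm_of_nonneg ht.1.le]
    exact (mul_le_of_le_one_left (norm_nonneg _) (pow_le_one₀ ht.1.le ht.2)).trans
      (h _ ⟨mul_nonneg ht.1.le hs, mul_le_of_le_one_left hs ht.2⟩)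
  simpa [radialMean] using intervalIntegral.norm_integral_le_of_norm_le_const hbound

lemma abs_radialFlux_le {B : ℝ} (hs : 0 ≤ s) (h : ∀ x ∈ Icc 0 s, |g x| ≤ B) :
    |radialFlux n α β g s| ≤ s * ((|β| + |α - n * β|) * B) := by
  rw [radialFlux, abs_mul, abs_of_nonneg hs, add_mul]
  gcongr
  refine (abs_add_le _ _).trans ?_
  rw [abs_mul, abs_mul]
  gcongr
  exacts [h s ⟨hs, le_rfl⟩, abs_radialMean_le hs h]

lemma abs_radialPotential_le {K D : ℝ} (hK : 0 < K) (hr : 0 ≤ r)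
    (h : ∀ x ∈ Icc 0 r, |g x| ≤ D * exp (K * x ^ 2)) :
    |radialPotential n α β g r|
      ≤ (|β| + |α - n * β|) * D / (2 * K) * exp (K * r ^ 2) := by
  set A := |β| + |α - n * β|
  have hD : 0 ≤ D := by simpa using (abs_nonneg _).trans (h 0 ⟨le_rfl, hr⟩)
  have hflux (s : ℝ) (hs : s ∈ Ioc 0 r) :
      |radialFlux n α β g s| ≤ s * (A * (D * exp (K * s ^ 2))) := by
    refine abs_radialFlux_le hs.1.le fun x hx => (h x ⟨hx.1, hx.2.trans hs.2⟩).trans ?_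
    have := pow_le_pow_left₀ hx.1 hx.2 2
    gcongr
  have hderiv (x : ℝ) : HasDerivAt (fun s => A * D / (2 * K) * exp (K * s ^ 2))
      (x * (A * (D * exp (K * x ^ 2)))) x := by
    refine (((hasDerivAt_pow 2 x).const_mul K).exp.const_mul (A * D / (2 * K))).congr_deriv ?_
    push_cast
    field_simp
  have hint : IntervalIntegrable (fun s => s * (A * (D * exp (K * s ^ 2))))
      MeasureTheory.volume 0 r :=
    Continuous.intervalIntegrable (by fun_prop) _ _
  calc |radialPotential n α β g r| ≤ ∫ s in (0 : ℝ)..r, s * (A * (D * exp (K * s ^ 2))) :=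
        intervalIntegral.norm_integral_le_of_norm_le (f := radialFlux n α β g) hr
          (Eventually.of_forall hflux) hint
    _ = A * D / (2 * K) * exp (K * r ^ 2) - A * D / (2 * K) * exp (K * 0 ^ 2) :=
        intervalIntegral.integral_eq_sub_of_hasDerivAt (fun x _ => hderiv x) hint
    _ ≤ A * D / (2 * K) * exp (K * r ^ 2) := sub_le_self _ (by positivity)

lemma pow_mul_radialMean (hn : n ≠ 0) (g : ℝ → ℝ) (s : ℝ) :
    s ^ n * radialMean n g s = ∫ x in (0 : ℝ)..s, x ^ (n - 1) * g x := by
  obtain ⟨k, rfl⟩ := Nat.exists_eq_succ_of_ne_zero hn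
  have hsubst := intervalIntegral.smul_integral_comp_mul_right (a := 0) (b := 1)
    (fun x => x ^ k * g x) s
  simp only [zero_mul, one_mul, smul_eq_mul] at hsubst
  rw [radialMean, Nat.succ_sub_one, ← hsubst, pow_succ', mul_assoc,
    ← intervalIntegral.integral_const_mul]
  congr 2
  funext t
  ring

lemma pow_mul_radialFlux (hn : n ≠ 0) (g : ℝ → ℝ) (s : ℝ) :
    s ^ (n - 1) * radialFlux n α β g s
      = β * s ^ n * g s + (α - n * β) * ∫ x in (0 : ℝ)..s, x ^ (n - 1) * g x := by
  rw [← pow_mul_radialMean hn, radialFlux, ← mul_assoc, pow_sub_one_mul hn]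
  ring

lemma hasDerivAt_integral_pow_mul (hg : Continuous g) (r : ℝ) :
    HasDerivAt (fun s => ∫ x in (0 : ℝ)..s, x ^ (n - 1) * g x) (r ^ (n - 1) * g r) r :=
  (Continuous.integral_hasStrictDerivAt (by fun_prop) 0 r).hasDerivAt

lemma hasDerivAt_pow_mul_radialFlux (hn : n ≠ 0) (hg : Continuous g) {g' : ℝ}
    (hg' : HasDerivAt g g' r) :
    HasDerivAt (fun s => s ^ (n - 1) * radialFlux n α β g s)
      (r ^ (n - 1) * (α * g r + β * r * g')) r := by
  simp only [pow_mul_radialFlux hn]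
  refine ((((hasDerivAt_pow n r).const_mul β).mul hg').add
    ((hasDerivAt_integral_pow_mul hg r).const_mul (α - n * β))).congr_deriv ?_
  rw [← pow_sub_one_mul hn r]
  ring

lemma radialFlux_eq_div (hn : n ≠ 0) (g : ℝ → ℝ) (hs : s ≠ 0) :
    radialFlux n α β g s
      = (β * s ^ n * g s + (α - n * β) * ∫ x in (0 : ℝ)..s, x ^ (n - 1) * g x) / s ^ (n - 1) := by
  rw [← pow_mul_radialFlux hn, mul_div_cancel_left₀ _ (pow_ne_zero _ hs)]

lemma contDiffOn_radialFlux (hn : n ≠ 0) (hg : Continuous g) (hg' : ContDiffOn ℝ 1 g (Ioi 0)) :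
    ContDiffOn ℝ 1 (radialFlux n α β g) (Ioi 0) := by
  have hint : ContDiff ℝ 1 fun s => ∫ x in (0 : ℝ)..s, x ^ (n - 1) * g x := by
    rw [contDiff_one_iff_deriv]
    refine ⟨fun r => (hasDerivAt_integral_pow_mul hg r).differentiableAt, ?_⟩
    simp only [funext fun r => (hasDerivAt_integral_pow_mul (n := n) hg r).deriv]
    fun_prop
  refine ContDiffOn.congr (f := fun s =>
    (β * s ^ n * g s + (α - n * β) * ∫ x in (0 : ℝ)..s, x ^ (n - 1) * g x) / s ^ (n - 1)) ?_
    fun s hs => radialFlux_eq_div hn g (ne_of_gt hs)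
  exact ContDiffOn.div (by fun_prop) (by fun_prop) fun s hs => pow_ne_zero _ (ne_of_gt hs)

lemma hasDerivAt_radialFlux (hn : n ≠ 0) (hg : Continuous g) {g' : ℝ} (hr : 0 < r)
    (hg' : HasDerivAt g g' r) :
    HasDerivAt (radialFlux n α β g)
      (α * g r + β * r * g' - (n - 1) / r * radialFlux n α β g r) r := by
  have hr' : r ^ (n - 1) ≠ 0 := pow_ne_zero _ hr.ne'
  have hdiv := (hasDerivAt_pow_mul_radialFlux (α := α) (β := β) hn hg hg').div
    (hasDerivAt_pow (n - 1) r) hr'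
  have heq : radialFlux n α β g
      =ᶠ[𝓝 r] fun s => s ^ (n - 1) * radialFlux n α β g s / s ^ (n - 1) := by
    filter_upwards [eventually_gt_nhds hr] with s hs
    exact (mul_div_cancel_left₀ _ (pow_ne_zero _ hs.ne')).symm
  refine (hdiv.congr_of_eventuallyEq heq).congr_deriv ?_
  obtain rfl | ⟨k, rfl⟩ : n = 1 ∨ ∃ k, n = k + 2 :=
    (Nat.one_le_iff_ne_zero.2 hn).eq_or_lt.imp Eq.symm fun h => ⟨n - 2, by omega⟩
  · simp
  · simp only [Nat.add_succ_sub_one]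
    push_cast
    field_simp
    ring

end RadialOperators

section LipschitzProblem

variable {n : ℕ} {α β K D c r R : ℝ} {L : ℝ≥0} {f u u₁ u₂ : ℝ → ℝ}

lemma abs_radialPotential_comp_sub_le (hf : LipschitzWith L f) (hK : 0 < K)
    (hLK : (|β| + |α - n * β|) * L ≤ K) (hu₁ : Continuous u₁) (hu₂ : Continuous u₂) (hr : 0 ≤ r)
    (h : ∀ x ∈ Icc 0 r, |u₁ x - u₂ x| ≤ D * exp (K * x ^ 2)) :
    |radialPotential n α β (fun s => f (u₁ s)) r - radialPotential n α β (fun s => f (u₂ s)) r|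
      ≤ D / 2 * exp (K * r ^ 2) := by
  have hfc := hf.continuous
  have hD : 0 ≤ D := by simpa using (abs_nonneg _).trans (h 0 ⟨le_rfl, hr⟩)
  have hfu : ∀ x ∈ Icc 0 r, |f (u₁ x) - f (u₂ x)| ≤ (L * D) * exp (K * x ^ 2) := fun x hx => by
    rw [mul_assoc]
    exact (hf.dist_le_mul _ _).trans (mul_le_mul_of_nonneg_left (h x hx) L.coe_nonneg)
  rw [← radialPotential_sub (by fun_prop) (by fun_prop)]
  refine (abs_radialPotential_le hK hr hfu).trans ?_
  gcongr ?_ * _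
  rw [div_le_div_iff₀ (by positivity) two_pos]
  calc (|β| + |α - n * β|) * (L * D) * 2 = (|β| + |α - n * β|) * L * (D * 2) := by ring
    _ ≤ K * (D * 2) := by gcongr
    _ = D * (2 * K) := by ring

-- At the maximum over `[0, R]` of `|u₁ r - u₂ r| * exp (-K * r ^ 2)` the estimate above halves the
-- maximum.
lemma eqOn_of_eq_sub_radialPotential_comp (hf : LipschitzWith L f) (hu₁ : Continuous u₁)
    (hu₂ : Continuous u₂)
    (h₁ : ∀ r ∈ Icc 0 R, u₁ r = c - radialPotential n α β (fun s => f (u₁ s)) r)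
    (h₂ : ∀ r ∈ Icc 0 R, u₂ r = c - radialPotential n α β (fun s => f (u₂ s)) r) :
    EqOn u₁ u₂ (Icc 0 R) := by
  set K : ℝ := (|β| + |α - n * β|) * L + 1
  have hK : 0 < K := by positivity
  rcases lt_or_ge R 0 with hR | hR
  · simp [Icc_eq_empty hR.not_ge]
  obtain ⟨x, hx, hmax⟩ := isCompact_Icc.exists_isMaxOn (nonempty_Icc.2 hR)
    (f := fun r => |u₁ r - u₂ r| / exp (K * r ^ 2))
    (ContinuousOn.div (by fun_prop) (by fun_prop) fun _ _ => (exp_pos _).ne')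
  set D := |u₁ x - u₂ x| / exp (K * x ^ 2)
  have hle : ∀ r ∈ Icc 0 R, |u₁ r - u₂ r| ≤ D * exp (K * r ^ 2) := fun r hr =>
    (div_le_iff₀ (exp_pos _)).1 (hmax hr)
  have hhalf : |u₁ x - u₂ x| ≤ D / 2 * exp (K * x ^ 2) := by
    rw [h₁ x hx, h₂ x hx, sub_sub_sub_cancel_left, abs_sub_comm]
    exact abs_radialPotential_comp_sub_le hf hK (le_add_of_nonneg_right zero_le_one) hu₁ hu₂ hx.1
      fun r hr => hle r ⟨hr.1, hr.2.trans hx.2⟩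
  have hD0 : D ≤ 0 := by
    have := (div_le_iff₀ (exp_pos _)).2 hhalf
    linarith
  intro r hr
  refine sub_eq_zero.1 (abs_nonpos_iff.1 ((hle r hr).trans ?_))
  exact mul_nonpos_of_nonpos_of_nonneg hD0 (exp_pos _).le

lemma abs_sub_radialPotential_comp_le (hf : LipschitzWith L f) (hK : 0 < K)
    (hLK : (|β| + |α - n * β|) * L ≤ K) (hu : Continuous u)
    (h : ∀ x, |u x| ≤ D * exp (K * x ^ 2)) (hr : 0 ≤ r) :
    |c - radialPotential n α β (fun s => f (u s)) r|
      ≤ (|c| + D / 2 + (|β| + |α - n * β|) * |f 0| / (2 * K)) * exp (K * r ^ 2) := by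
  have hexp (x : ℝ) : 1 ≤ exp (K * x ^ 2) := one_le_exp (by positivity)
  have hdiff := abs_radialPotential_comp_sub_le (u₂ := fun _ => 0) hf hK hLK hu continuous_const hr
    fun x _ => by simpa using h x
  have hconst := abs_radialPotential_le (n := n) (α := α) (β := β) (g := fun _ => f 0) hK hr
    fun x _ => le_mul_of_one_le_right (abs_nonneg _) (hexp x)
  have hc := le_mul_of_one_le_right (abs_nonneg c) (hexp r)
  calc |c - radialPotential n α β (fun s => f (u s)) r|
      = |c - (radialPotential n α β (fun s => f (u s)) r - radialPotential n α β (fun _ => f 0) r)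
          - radialPotential n α β (fun _ => f 0) r| := by ring_nf
    _ ≤ |c| + |radialPotential n α β (fun s => f (u s)) r - radialPotential n α β (fun _ => f 0) r|
          + |radialPotential n α β (fun _ => f 0) r| :=
        (abs_sub _ _).trans (by gcongr; exact abs_sub _ _)
    _ ≤ (|c| + D / 2 + (|β| + |α - n * β|) * |f 0| / (2 * K)) * exp (K * r ^ 2) := by
        rw [add_mul, add_mul]
        gcongr

lemma exists_boundedContinuousFunction_eq_div_exp {w : ℝ → ℝ} (hw : Continuous w)
    (h : ∀ r, 0 ≤ r → |w r| ≤ D * exp (K * r ^ 2)) :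
    ∃ z : BoundedContinuousFunction ℝ ℝ, ∀ r, z r = w |r| / exp (K * |r| ^ 2) := by
  refine ⟨.ofNormedAddCommGroup (fun r => w |r| / exp (K * |r| ^ 2))
    (Continuous.div (by fun_prop) (by fun_prop) fun _ => (exp_pos _).ne') D fun r => ?_,
    fun _ => rfl⟩
  rw [norm_div, norm_of_nonneg (exp_pos _).le, div_le_iff₀ (exp_pos _)]
  exact h |r| (abs_nonneg r)

-- A contraction on the continuous functions which are `O(exp (K * r ^ 2))`, written as
-- `exp (K * r ^ 2) * z r` with `z` bounded and continuous.
lemma exists_eq_sub_radialPotential_comp (n : ℕ) (α β c : ℝ) (hf : LipschitzWith L f) :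
    ∃ u : ℝ → ℝ, Continuous u ∧
      ∀ r, 0 ≤ r → u r = c - radialPotential n α β (fun s => f (u s)) r := by
  have hfc := hf.continuous
  set K : ℝ := (|β| + |α - n * β|) * L + 1
  have hK : 0 < K := by positivity
  have hLK : (|β| + |α - n * β|) * L ≤ K := le_add_of_nonneg_right zero_le_one
  let U (z : BoundedContinuousFunction ℝ ℝ) (s : ℝ) : ℝ := exp (K * s ^ 2) * z s
  have hUc (z) : Continuous (U z) := by fun_prop
  have hU (z : BoundedContinuousFunction ℝ ℝ) (s : ℝ) : |U z s| ≤ ‖z‖ * exp (K * s ^ 2) := by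
    rw [abs_mul, abs_of_pos (exp_pos _), mul_comm]
    gcongr
    exact z.norm_coe_le_norm s
  have hUsub (z₁ z₂ : BoundedContinuousFunction ℝ ℝ) (s : ℝ) : U z₁ s - U z₂ s = U (z₁ - z₂) s :=
    (mul_sub ..).symm
  have hΦ (z : BoundedContinuousFunction ℝ ℝ) : ∃ z' : BoundedContinuousFunction ℝ ℝ, ∀ r, z' r =
      (c - radialPotential n α β (fun s => f (U z s)) |r|) / exp (K * |r| ^ 2) :=
    exists_boundedContinuousFunction_eq_div_exp (by fun_prop) fun r hr =>
      abs_sub_radialPotential_comp_le hf hK hLK (hUc z) (hU z) hr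
  choose Φ hΦ using hΦ
  have hcontr : ContractingWith (1 / 2) Φ := by
    refine ⟨by norm_num [← NNReal.coe_lt_coe], LipschitzWith.of_dist_le_mul fun z₁ z₂ => ?_⟩
    rw [BoundedContinuousFunction.dist_le (by positivity)]
    intro r
    rw [hΦ, hΦ, dist_comm, Real.dist_eq, ← sub_div, sub_sub_sub_cancel_left, abs_div,
      abs_of_pos (exp_pos _), div_le_iff₀ (exp_pos _), dist_eq_norm]
    refine (abs_radialPotential_comp_sub_le hf hK hLK (hUc z₁) (hUc z₂) (abs_nonneg r)
      fun x _ => (hUsub z₁ z₂ x).symm ▸ hU (z₁ - z₂) x).trans_eq ?_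
    push_cast
    ring
  refine ⟨U (hcontr.fixedPoint Φ), hUc _, fun r hr => ?_⟩
  have hfix := hΦ (hcontr.fixedPoint Φ) r
  rw [hcontr.fixedPoint_isFixedPt.eq, abs_of_nonneg hr, eq_div_iff (exp_pos _).ne'] at hfix
  rw [← hfix, mul_comm]

end LipschitzProblem

/-- `u` is a continuous, on `[0, T)` positive solution of the integrated radial equation for
`u = v ^ (1 / p)`: on `(0, T)` it says `u'' + (n - 1) / r u' + α u ^ p + β r (u ^ p)' = 0`, and
`u 0 = c`. The constants `α` and `β` are those of (E) divided by `(n - 1) / m`. -/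
structure IsProfile (n : ℕ) (p α β c T : ℝ) (u : ℝ → ℝ) : Prop where
  continuous : Continuous u
  pos : ∀ r ∈ Ico 0 T, 0 < u r
  eq : ∀ r ∈ Ico 0 T, u r = c - radialPotential n α β (fun s => u s ^ p) r

namespace IsProfile

variable {n : ℕ} {p α β c r T : ℝ} {f u u₁ u₂ : ℝ → ℝ}

lemma mono {T' : ℝ} (h : IsProfile n p α β c T u) (hT : T' ≤ T) : IsProfile n p α β c T' u where
  continuous := h.continuous
  pos r hr := h.pos r ⟨hr.1, hr.2.trans_le hT⟩
  eq r hr := h.eq r ⟨hr.1, hr.2.trans_le hT⟩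

lemma apply_zero (h : IsProfile n p α β c T u) (hT : 0 < T) : u 0 = c := by
  simpa using h.eq 0 ⟨le_rfl, hT⟩

lemma const (hn : n ≠ 0) (hc : 0 < c) : IsProfile n p 0 β c T fun _ => c where
  continuous := continuous_const
  pos _ _ := hc
  eq r _ := by simp [radialPotential, radialFlux_const hn]

lemma congr (h : IsProfile n p α β c T u₁) (hu₂ : Continuous u₂) (heq : EqOn u₂ u₁ (Ico 0 T)) :
    IsProfile n p α β c T u₂ where
  continuous := hu₂
  pos r hr := heq hr ▸ h.pos r hr
  eq r hr := by
    rw [heq hr, h.eq r hr]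
    congr 1
    exact radialPotential_congr hr.1 fun s hs =>
      congrArg (· ^ p) (heq ⟨hs.1, hs.2.trans_lt hr.2⟩).symm

lemma of_mapsTo {δ M : ℝ} (hδ : 0 < δ) (hf : EqOn (fun x => x ^ p) f (Icc δ M))
    (hu : Continuous u) (heq : ∀ r, 0 ≤ r → u r = c - radialPotential n α β (fun s => f (u s)) r)
    (hmaps : MapsTo u (Ico 0 T) (Icc δ M)) : IsProfile n p α β c T u where
  continuous := hu
  pos r hr := hδ.trans_le (hmaps hr).1
  eq r hr := by
    rw [heq r hr.1]
    congr 1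
    exact radialPotential_congr hr.1 fun s hs => (hf (hmaps ⟨hs.1, hs.2.trans_lt hr.2⟩)).symm

lemma eqOn_Icc (h₁ : IsProfile n p α β c T u₁) (h₂ : IsProfile n p α β c T u₂) (hT : 0 < T) :
    EqOn u₁ u₂ (Icc 0 T) := by
  suffices EqOn u₁ u₂ (Ico 0 T) by
    simpa only [closure_Ico hT.ne] using this.closure h₁.continuous h₂.continuous
  intro r hr
  have hcompact : IsCompact (u₁ '' Icc 0 r ∪ u₂ '' Icc 0 r) :=
    (isCompact_Icc.image h₁.continuous).union (isCompact_Icc.image h₂.continuous)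
  have hsubset : Icc 0 r ⊆ Ico 0 T := Icc_subset_Ico_right hr.2
  obtain ⟨δ, M, hδ, hδM⟩ := exists_subset_Ioo_of_isCompact_of_subset_Ioi (l := 0) hcompact <|
    union_subset (image_subset_iff.2 fun s hs => h₁.pos s (hsubset hs))
      (image_subset_iff.2 fun s hs => h₂.pos s (hsubset hs))
  obtain ⟨L, f, hf, hfp⟩ := exists_lipschitzWith_eqOn_rpow (b := M) p hδ
  have heq {u : ℝ → ℝ} (h : IsProfile n p α β c T u) (hu : u '' Icc 0 r ⊆ Ioo δ M) :
      ∀ s ∈ Icc 0 r, u s = c - radialPotential n α β (fun x => f (u x)) s := fun s hs => by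
    rw [h.eq s (hsubset hs)]
    congr 1
    exact radialPotential_congr hs.1 fun x hx =>
      hfp (Ioo_subset_Icc_self (hu (mem_image_of_mem u ⟨hx.1, hx.2.trans hs.2⟩)))
  exact eqOn_of_eq_sub_radialPotential_comp hf h₁.continuous h₂.continuous
    (heq h₁ (subset_union_left.trans hδM)) (heq h₂ (subset_union_right.trans hδM)) ⟨hr.1, le_rfl⟩

lemma continuous_rpow (h : IsProfile n p α β c T u) (hp : 0 < p) : Continuous fun s => u s ^ p :=
  h.continuous.rpow_const fun _ => Or.inr hp.le

protected lemma hasDerivAt (h : IsProfile n p α β c T u) (hp : 0 < p) (hr : r ∈ Ioo 0 T) :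
    HasDerivAt u (-radialFlux n α β (fun s => u s ^ p) r) r := by
  refine ((hasDerivAt_radialPotential (h.continuous_rpow hp) r).const_sub
    c).congr_of_eventuallyEq ?_
  filter_upwards [Ioo_mem_nhds hr.1 hr.2] with s hs
  exact h.eq s ⟨hs.1.le, hs.2⟩

lemma hasDerivAt_rpow (h : IsProfile n p α β c T u) (hp : 0 < p) (hr : r ∈ Ioo 0 T) :
    HasDerivAt (fun s => u s ^ p)
      (-radialFlux n α β (fun s => u s ^ p) r * p * u r ^ (p - 1)) r :=
  (h.hasDerivAt hp hr).rpow_const (Or.inl (h.pos r ⟨hr.1.le, hr.2⟩).ne')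

lemma hasDerivWithinAt_zero (h : IsProfile n p α β c T u) (hp : 0 < p) (hT : 0 < T) :
    HasDerivWithinAt u 0 (Ici 0) 0 := by
  have hd := ((hasDerivAt_radialPotential (n := n) (α := α) (β := β) (h.continuous_rpow hp)
    0).const_sub c).hasDerivWithinAt (s := Ici 0)
  rw [radialFlux_zero, neg_zero] at hd
  refine hd.congr_of_eventuallyEq ?_ (h.eq 0 ⟨le_rfl, hT⟩)
  filter_upwards [Ico_mem_nhdsGE hT] with s hs using h.eq s hs

-- A profile solves `u' = -radialFlux n α β (u ^ p)`, where the flux is as smooth as `u ^ p` on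
-- `(0, T)`.
lemma contDiffOn_two (h : ∀ T, IsProfile n p α β c T u) (hn : n ≠ 0) (hp : 0 < p) :
    ContDiffOn ℝ 2 u (Ioi 0) := by
  have hpow := (h 1).continuous_rpow hp
  have hd (r : ℝ) (hr : r ∈ Ioi 0) :
      HasDerivAt u (-radialFlux n α β (fun s => u s ^ p) r) r :=
    (h (r + 1)).hasDerivAt hp ⟨hr, lt_add_one r⟩
  have hdiff : DifferentiableOn ℝ u (Ioi 0) := fun r hr =>
    (hd r hr).differentiableAt.differentiableWithinAt
  have hderiv : EqOn (deriv u) (fun r => -radialFlux n α β (fun s => u s ^ p) r) (Ioi 0) :=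
    fun r hr => (hd r hr).deriv
  have hu1 : ContDiffOn ℝ 1 u (Ioi 0) := (contDiffOn_succ_iff_deriv_of_isOpen (n := 0) isOpen_Ioi).2
    ⟨hdiff, by simp, contDiffOn_zero.2 ((by fun_prop : Continuous _).continuousOn.congr hderiv)⟩
  have hpow1 : ContDiffOn ℝ 1 (fun s => u s ^ p) (Ioi 0) :=
    hu1.rpow_const_of_ne fun r hr => ((h (r + 1)).pos r ⟨le_of_lt hr, lt_add_one r⟩).ne'
  exact (contDiffOn_succ_iff_deriv_of_isOpen (n := 1) isOpen_Ioi).2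
    ⟨hdiff, by simp, (contDiffOn_radialFlux hn hpow hpow1).neg.congr hderiv⟩

end IsProfile

/-- `α u + β p r u'` for a profile `u`, with `u'` expressed as a flux. In terms of `v = u ^ p` it is
`u ^ (1 - p) * (α v + β r v')`, and `α v + β r v'` is, up to a negative factor, the time derivative
of the self-similar solution `t ^ (-α) * v (x * t ^ (-β))` of the fast diffusion equation. -/
noncomputable def selfSimilarRate (n : ℕ) (p α β : ℝ) (u : ℝ → ℝ) (r : ℝ) : ℝ :=
  α * u r - β * p * r * radialFlux n α β (fun s => u s ^ p) r

namespace IsProfile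

variable {n : ℕ} {p α β c r T : ℝ} {u : ℝ → ℝ}

lemma drift_eq (h : IsProfile n p α β c T u) (hr : r ∈ Ico 0 T) :
    α * u r ^ p + β * r * (-radialFlux n α β (fun s => u s ^ p) r * p * u r ^ (p - 1))
      = u r ^ (p - 1) * selfSimilarRate n p α β u r := by
  have hrpow : u r ^ p = u r ^ (p - 1) * u r := by
    rw [← rpow_add_one (h.pos r hr).ne', sub_add_cancel]
  rw [selfSimilarRate, hrpow]
  ring

lemma hasDerivAt_selfSimilarRate (h : IsProfile n p α β c T u) (hn : n ≠ 0) (hp : 0 < p)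
    (hr : r ∈ Ioo 0 T) :
    HasDerivAt (selfSimilarRate n p α β u)
      ((β * p * (n - 2) - α) * radialFlux n α β (fun s => u s ^ p) r
        - β * p * r * u r ^ (p - 1) * selfSimilarRate n p α β u r) r := by
  have hflux := hasDerivAt_radialFlux (α := α) (β := β) hn (h.continuous_rpow hp) hr.1
    (h.hasDerivAt_rpow hp hr)
  rw [h.drift_eq ⟨hr.1.le, hr.2⟩] at hflux
  refine (((h.hasDerivAt hp hr).const_mul α).sub
    (((hasDerivAt_id r).const_mul (β * p)).mul hflux)).congr_deriv ?_
  have hr0 := hr.1.ne'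
  simp only [id]
  field_simp
  ring

-- Eliminating the flux, `Z = selfSimilarRate` solves
-- `(α Z)' + (β p r u ^ (p - 1) + γ / (β p r)) (α Z) = γ / (β p r) α ^ 2 u` with
-- `γ = β p (n - 2) - α`.
lemma mul_selfSimilarRate_pos (h : IsProfile n p α β c T u) (hn : n ≠ 0) (hp : 0 < p) (hβ : 0 < β)
    (hα : α ≠ 0) (hαβ : α ≤ β * p * (n - 2)) (hr : r ∈ Ioo 0 T) :
    0 < α * selfSimilarRate n p α β u r := by
  set Z := selfSimilarRate n p α β u
  set γ := β * p * (n - 2) - α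
  have : 0 ≤ γ := sub_nonneg.2 hαβ
  have hupc := h.continuous_rpow hp
  have hZc : Continuous fun x => α * Z x := by
    have := h.continuous
    simp only [Z, selfSimilarRate]
    fun_prop
  have hZ0 : 0 < α * Z 0 := by
    have hu0 := h.pos 0 ⟨le_rfl, hr.1.trans hr.2⟩
    simp only [Z, selfSimilarRate, mul_zero, zero_mul, sub_zero, ← mul_assoc]
    exact mul_pos (mul_self_pos.2 hα) hu0
  obtain ⟨ε, hZε, hε⟩ : ∃ ε, 0 < α * Z ε ∧ ε ∈ Ioo 0 r :=
    (((hZc.tendsto 0).eventually (lt_mem_nhds hZ0)).filter_mono nhdsWithin_le_nhds |>.and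
      (Ioo_mem_nhdsGT hr.1)).exists
  have hIcc : ∀ x ∈ Icc ε r, 0 < x ∧ 0 < u x := fun x hx =>
    ⟨hε.1.trans_le hx.1, h.pos x ⟨hε.1.le.trans hx.1, hx.2.trans_lt hr.2⟩⟩
  refine pos_of_deriv_add_mul_nonneg (W := fun x => α * Z x)
    (q := fun x => β * p * x * u x ^ (p - 1) + γ / (β * p * x)) hε.2.le hZc.continuousOn ?_
    (fun x hx => (h.hasDerivAt_selfSimilarRate hn hp
      ⟨hε.1.trans hx.1, hx.2.trans hr.2⟩).const_mul α) (fun x hx => ?_) hZε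
  · have hu : ContinuousOn (fun x => u x ^ (p - 1)) (Icc ε r) :=
      h.continuous.continuousOn.rpow_const fun x hx => Or.inl (hIcc x hx).2.ne'
    have hdiv : ContinuousOn (fun x => γ / (β * p * x)) (Icc ε r) :=
      continuousOn_const.div (by fun_prop) fun x hx => (mul_pos (mul_pos hβ hp) (hIcc x hx).1).ne'
    fun_prop
  · obtain ⟨hx0, hux⟩ := hIcc x (Ioo_subset_Icc_self hx)
    calc 0 ≤ γ / (β * p * x) * (α ^ 2 * u x) := by positivity
      _ = _ := by
        simp only [Z, selfSimilarRate]
        field_simp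
        ring

lemma mul_radialFlux_nonneg (h : IsProfile n p α β c T u) (hn : n ≠ 0) (hp : 0 < p) (hβ : 0 < β)
    (hα : α ≠ 0) (hαβ : α ≤ β * p * (n - 2)) (hr : r ∈ Ioo 0 T) :
    0 ≤ α * radialFlux n α β (fun s => u s ^ p) r := by
  have hupc := h.continuous_rpow hp
  have hmono : MonotoneOn
      (fun s => α * (s ^ (n - 1) * radialFlux n α β (fun s => u s ^ p) s)) (Icc 0 r) := by
    refine monotoneOn_of_hasDerivWithinAt_nonneg (convex_Icc 0 r) (by fun_prop)
      (f' := fun x => x ^ (n - 1) * (u x ^ (p - 1) * (α * selfSimilarRate n p α β u x)))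
      (fun x hx => ?_) fun x hx => ?_
    all_goals
      rw [interior_Icc] at hx
      have hxT : x ∈ Ioo 0 T := ⟨hx.1, hx.2.trans hr.2⟩
    · refine (((hasDerivAt_pow_mul_radialFlux hn hupc (h.hasDerivAt_rpow hp hxT)).const_mul
        α).congr_deriv ?_).hasDerivWithinAt
      rw [h.drift_eq ⟨hxT.1.le, hxT.2⟩]
      ring
    · exact mul_nonneg (pow_nonneg hx.1.le _) <|
        mul_nonneg (rpow_nonneg (h.pos x ⟨hxT.1.le, hxT.2⟩).le _)
          (h.mul_selfSimilarRate_pos hn hp hβ hα hαβ hxT).le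
  have h0r := hmono (left_mem_Icc.2 hr.1.le) (right_mem_Icc.2 hr.1.le) hr.1.le
  simp only [radialFlux_zero, mul_zero, mul_left_comm α] at h0r
  exact nonneg_of_mul_nonneg_right h0r (pow_pos hr.1 _)

lemma antitoneOn_mul (h : IsProfile n p α β c T u) (hn : n ≠ 0) (hp : 0 < p) (hβ : 0 < β)
    (hα : α ≠ 0) (hαβ : α ≤ β * p * (n - 2)) : AntitoneOn (fun r => α * u r) (Icc 0 T) := by
  have hu := h.continuous
  refine antitoneOn_of_hasDerivWithinAt_nonpos (convex_Icc 0 T) (by fun_prop)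
    (f' := fun r => α * -radialFlux n α β (fun s => u s ^ p) r) (fun r hr => ?_) fun r hr => ?_
  all_goals rw [interior_Icc] at hr
  · exact ((h.hasDerivAt hp hr).const_mul α).hasDerivWithinAt
  · rw [mul_neg, neg_nonpos]
    exact h.mul_radialFlux_nonneg hn hp hβ hα hαβ hr

lemma monotoneOn_mul_rpow_mul (h : IsProfile n p α β c T u) (hn : n ≠ 0) (hp : 0 < p) (hβ : 0 < β)
    (hα : α ≠ 0) (hαβ : α ≤ β * p * (n - 2)) :
    MonotoneOn (fun r => α * (r ^ (α / (β * p)) * u r)) (Ioc 0 T) := by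
  refine monotoneOn_of_hasDerivWithinAt_nonneg (convex_Ioc 0 T) ?_
    (f' := fun r => r ^ (α / (β * p) - 1) * (α * selfSimilarRate n p α β u r) / (β * p))
    (fun r hr => ?_) fun r hr => ?_
  · exact continuousOn_const.mul ((continuousOn_id.rpow_const fun r hr => Or.inl hr.1.ne').mul
      h.continuous.continuousOn)
  all_goals rw [interior_Ioc] at hr
  · refine ((((hasDerivAt_rpow_const (Or.inl hr.1.ne')).mul (h.hasDerivAt hp hr)).const_mul
      α).congr_deriv ?_).hasDerivWithinAt
    have hrpow : r ^ (α / (β * p)) = r ^ (α / (β * p) - 1) * r := by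
      rw [← rpow_add_one hr.1.ne', sub_add_cancel]
    rw [hrpow, selfSimilarRate]
    field_simp
    ring
  · have := h.mul_selfSimilarRate_pos hn hp hβ hα hαβ hr
    have := rpow_pos_of_pos hr.1 (α / (β * p) - 1)
    positivity

lemma apply_mem_uIcc (h : IsProfile n p α β c T u) (hn : n ≠ 0) (hp : 0 < p) (hβ : 0 < β)
    (hα : α ≠ 0) (hαβ : α ≤ β * p * (n - 2)) (hr : 0 < r) (hrT : r ≤ T) :
    u T ∈ uIcc ((r / T) ^ (α / (β * p)) * u r) (u r) := by
  have hT : 0 < T := hr.trans_le hrT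
  have hanti : α * u T ≤ α * u r :=
    h.antitoneOn_mul hn hp hβ hα hαβ ⟨hr.le, hrT⟩ ⟨hT.le, le_rfl⟩ hrT
  have hmono := h.monotoneOn_mul_rpow_mul hn hp hβ hα hαβ ⟨hr, hrT⟩ ⟨hT, le_rfl⟩ hrT
  have hmono' : α * ((r / T) ^ (α / (β * p)) * u r) ≤ α * u T := by
    rw [div_rpow hr.le hT.le, div_mul_eq_mul_div, mul_div_assoc', div_le_iff₀ (by positivity),
      mul_assoc, mul_comm (u T)]
    exact hmono
  rw [mem_uIcc]
  rcases hα.lt_or_gt with hα | hα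
  · exact Or.inr ⟨(mul_le_mul_left_of_neg hα).1 hanti, (mul_le_mul_left_of_neg hα).1 hmono'⟩
  · exact Or.inl ⟨le_of_mul_le_mul_left hmono' hα, le_of_mul_le_mul_left hanti hα⟩

end IsProfile

section Existence

variable {n : ℕ} {p α β c T : ℝ}

lemma exists_isProfile_pos (n : ℕ) (p α β : ℝ) (hc : 0 < c) :
    ∃ T u, 0 < T ∧ IsProfile n p α β c T u := by
  obtain ⟨L, f, hf, hfp⟩ := exists_lipschitzWith_eqOn_rpow (b := 2 * c) p (half_pos hc)
  obtain ⟨u, hu, heq⟩ := exists_eq_sub_radialPotential_comp n α β c hf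
  have hu0 : u 0 = c := by simpa using heq 0 le_rfl
  have hnhds : u ⁻¹' Icc (c / 2) (2 * c) ∈ 𝓝 0 :=
    hu.continuousAt.preimage_mem_nhds (Icc_mem_nhds (by linarith) (by linarith))
  obtain ⟨T, hT, hmaps⟩ := mem_nhdsGE_iff_exists_Ico_subset.1 (mem_nhdsWithin_of_mem_nhds hnhds)
  exact ⟨T, u, hT, .of_mapsTo (half_pos hc) hfp hu heq hmaps⟩

lemma exists_forall_isProfile_mem_Ioo (hn : n ≠ 0) (hp : 0 < p) (hβ : 0 < β) (hc : 0 < c)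
    (hα : α ≠ 0) (hαβ : α ≤ β * p * (n - 2)) (hT : 0 ≤ T) :
    ∃ δ M, 0 < δ ∧ c ∈ Ioo δ M ∧
      ∀ R ∈ Ioc 0 T, ∀ u, IsProfile n p α β c R u → u R ∈ Ioo δ M := by
  obtain ⟨T₀, u₀, hT₀, h₀⟩ := exists_isProfile_pos n p α β hc
  obtain ⟨r₀, hr₀, hr₀T⟩ := exists_between hT₀
  let hi (R : ℝ) : ℝ := u₀ (min R r₀)
  let lo (R : ℝ) : ℝ := (r₀ / max R r₀) ^ (α / (β * p)) * hi R
  have hratio (R : ℝ) : 0 < r₀ / max R r₀ := div_pos hr₀ (lt_max_of_lt_right hr₀)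
  have hhi : Continuous hi := h₀.continuous.comp (by fun_prop)
  have hlo : Continuous lo := Continuous.mul
    ((continuous_const.div (by fun_prop) fun R => (lt_max_of_lt_right hr₀).ne').rpow_const
      fun R => Or.inl (hratio R).ne') hhi
  have hhi_pos : ∀ R ∈ Icc 0 T, 0 < hi R := fun R hR =>
    h₀.pos _ ⟨le_min hR.1 hr₀.le, (min_le_right _ _).trans_lt hr₀T⟩
  obtain ⟨δ, M, hδ, hδM⟩ := exists_subset_Ioo_of_isCompact_of_subset_Ioi (l := 0)
    ((isCompact_Icc.image hlo).union (isCompact_Icc.image hhi)) <| union_subset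
      (image_subset_iff.2 fun R hR => mul_pos (rpow_pos_of_pos (hratio R) _) (hhi_pos R hR))
      (image_subset_iff.2 hhi_pos)
  refine ⟨δ, M, hδ, hδM (Or.inr ⟨0, ⟨le_rfl, hT⟩, ?_⟩), fun R hR u hu => ?_⟩
  · simp only [hi, min_eq_left hr₀.le, h₀.apply_zero hT₀]
  · have hr : 0 < min R r₀ := lt_min hR.1 hr₀
    have hRT : R ∈ Icc 0 T := Ioc_subset_Icc_self hR
    have hu_eq : u (min R r₀) = hi R := (hu.mono (min_le_left _ _)).eqOn_Icc
      (h₀.mono ((min_le_right _ _).trans hr₀T.le)) hr ⟨hr.le, le_rfl⟩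
    have hdiv : min R r₀ / R = r₀ / max R r₀ := by
      rw [div_eq_div_iff hR.1.ne' (lt_max_of_lt_right hr₀).ne', min_mul_max, mul_comm]
    have hmem := hu.apply_mem_uIcc hn hp hβ hα hαβ hr (min_le_left _ _)
    rw [hu_eq, hdiv] at hmem
    exact ordConnected_Ioo.uIcc_subset (hδM (Or.inl (mem_image_of_mem lo hRT)))
      (hδM (Or.inr (mem_image_of_mem hi hRT))) hmem

lemma exists_isProfile (hn : n ≠ 0) (hp : 0 < p) (hβ : 0 < β) (hc : 0 < c)
    (hαβ : α ≤ β * p * (n - 2)) (hT : 0 ≤ T) : ∃ u, IsProfile n p α β c T u := by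
  obtain rfl | hα := eq_or_ne α 0
  · exact ⟨_, .const hn hc⟩
  obtain ⟨δ, M, hδ, hcM, hbound⟩ := exists_forall_isProfile_mem_Ioo hn hp hβ hc hα hαβ hT
  obtain ⟨L, f, hf, hfp⟩ := exists_lipschitzWith_eqOn_rpow (b := M) p hδ
  obtain ⟨u, hu, heq⟩ := exists_eq_sub_radialPotential_comp n α β c hf
  have hprofile {R : ℝ} (hmaps : MapsTo u (Ico 0 R) (Ioo δ M)) : IsProfile n p α β c R u :=
    .of_mapsTo hδ hfp hu heq (hmaps.mono_right Ioo_subset_Icc_self)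
  have hmaps : MapsTo u (Icc 0 T) (Ioo δ M) := by
    refine mapsTo_Icc_of_forall_mapsTo_Ico hu.continuousOn isOpen_Ioo fun R hR hmaps => ?_
    obtain rfl | hR0 := hR.1.eq_or_lt
    · simpa [heq 0 le_rfl] using hcM
    · exact hbound R ⟨hR0, hR.2⟩ u (hprofile hmaps)
  exact ⟨u, hprofile (hmaps.mono_left Ico_subset_Icc_self)⟩

lemma exists_forall_isProfile (hn : n ≠ 0) (hp : 0 < p) (hβ : 0 < β) (hc : 0 < c)
    (hαβ : α ≤ β * p * (n - 2)) : ∃ u, ∀ T, IsProfile n p α β c T u := by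
  choose U hU using fun N : ℕ => exists_isProfile hn hp hβ hc hαβ N.cast_nonneg
  have hcompat (N N' : ℕ) (hN : N ≤ N') : EqOn (U N) (U N') (Ico 0 N) := by
    obtain rfl | hN0 := N.eq_zero_or_pos
    · simp
    · exact ((hU N).eqOn_Icc ((hU N').mono (Nat.cast_le.2 hN)) (Nat.cast_pos.2 hN0)).mono
        Ico_subset_Icc_self
  obtain ⟨u, hu, heq⟩ := exists_continuous_eqOn_Ico (fun N => (hU N).continuous) hcompat
  refine ⟨u, fun T => ?_⟩
  obtain ⟨N, hN⟩ := exists_nat_ge T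
  exact ((hU N).congr hu (heq N)).mono hN

end Existence

section RadialEquation

variable {n : ℕ} {m α β η r : ℝ} {u v : ℝ → ℝ}

lemma eq_sub_radialPotential_of_ode {w w' w'' g g' : ℝ → ℝ} (hn : 2 ≤ n)
    (hw : ContinuousOn w (Ici 0)) (hg : Continuous g) (hw' : ∀ r, 0 < r → HasDerivAt w (w' r) r)
    (hw'' : ∀ r, 0 < r → HasDerivAt w' (w'' r) r) (hg' : ∀ r, 0 < r → HasDerivAt g (g' r) r)
    (hode : ∀ r, 0 < r → w'' r + (n - 1) / r * w' r + α * g r + β * r * g' r = 0) (hr : 0 ≤ r) :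
    w r = w 0 - radialPotential n α β g r := by
  have hn0 : n ≠ 0 := by omega
  have hsum (r : ℝ) (hr : 0 < r) :
      HasDerivAt (fun s => s ^ (n - 1) * (w' s + radialFlux n α β g s)) 0 r := by
    refine ((hasDerivAt_pow (n - 1) r).mul
      ((hw'' r hr).add (hasDerivAt_radialFlux hn0 hg hr (hg' r hr)))).congr_deriv ?_
    have hw''r : w'' r = -((n - 1) / r * w' r + α * g r + β * r * g' r) := by
      linarith [hode r hr]
    obtain ⟨k, rfl⟩ := Nat.exists_eq_add_of_le' hn
    simp only [hw''r, Pi.add_apply, Nat.add_succ_sub_one]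
    push_cast
    field_simp
    ring
  obtain ⟨C, hC⟩ := isOpen_Ioi.exists_is_const_of_deriv_eq_zero isPreconnected_Ioi
    (fun r hr => (hsum r hr).differentiableAt.differentiableWithinAt) fun r hr => (hsum r hr).deriv
  have hC0 : C = 0 := by
    refine eq_zero_of_tendsto_pow_mul_deriv (N := n - 1) (by omega) hw hw' ?_
    have hflux : Tendsto (fun s => C - s ^ (n - 1) * radialFlux n α β g s) (𝓝[>] 0) (𝓝 C) := by
      have : Continuous fun s => C - s ^ (n - 1) * radialFlux n α β g s := by fun_prop
      simpa using (this.tendsto 0).mono_left nhdsWithin_le_nhds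
    refine hflux.congr' ?_
    filter_upwards [self_mem_nhdsWithin] with s hs
    rw [← hC s hs]
    ring
  have hflux : ∀ s ∈ Ioo 0 r, HasDerivAt w (-radialFlux n α β g s) s := fun s hs => by
    have h0 := (mul_eq_zero.1 ((hC s hs.1).trans hC0)).resolve_left (pow_ne_zero _ hs.1.ne')
    exact eq_neg_of_add_eq_zero_left h0 ▸ hw' s hs.1
  have hftc := intervalIntegral.integral_eq_sub_of_hasDerivAt_of_le hr
    (hw.mono Icc_subset_Ici_self) hflux
    ((continuous_radialFlux hg).neg.intervalIntegrable 0 r)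
  rw [intervalIntegral.integral_neg] at hftc
  rw [radialPotential]
  linarith

-- The outer constant of (E) moves to the lower order terms, and `p` stands for `1 / m`.
lemma isRadialSol_of_isProfile (hn : 2 ≤ n) (hη : 0 < η) (hm : 0 < m)
    (h : ∀ T, IsProfile n (1 / m) (m / (n - 1) * α) (m / (n - 1) * β) (η ^ m) T u) :
    IsRadialSol n m α β η fun r => u r ^ (1 / m) := by
  have hp : 0 < 1 / m := one_div_pos.2 hm
  have hn1 : (n : ℝ) - 1 ≠ 0 := by
    have : (2 : ℝ) ≤ n := by exact_mod_cast hn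
    linarith
  have hpos (r : ℝ) (hr : 0 ≤ r) : 0 < u r := (h (r + 1)).pos r ⟨hr, lt_add_one r⟩
  have hmem {r : ℝ} (hr : 0 < r) : r ∈ Ioo 0 (r + 1) := ⟨hr, lt_add_one r⟩
  have hu0 : u 0 = η ^ m := (h 1).apply_zero one_pos
  have hg := (h 1).continuous_rpow hp
  refine ⟨fun r hr => rpow_pos_of_pos (hpos r hr) _, hg.continuousOn, ?_, ?_, ?_, fun r hr => ?_⟩
  · exact (IsProfile.contDiffOn_two h (by omega) hp).rpow_const_of_ne fun s hs =>
      (hpos s (le_of_lt hs)).ne'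
  · exact (((h 1).hasDerivWithinAt_zero hp one_pos).rpow_const
      (Or.inl (hpos 0 le_rfl).ne')).congr_deriv (by simp)
  · simp only [hu0, ← rpow_mul hη.le, mul_one_div_cancel hm.ne', rpow_one]
  · have hvm : (fun s => (u s ^ (1 / m)) ^ m) =ᶠ[𝓝 r] u := by
      filter_upwards [Ioi_mem_nhds hr] with s hs
      rw [← rpow_mul (hpos s (le_of_lt hs)).le, one_div_mul_cancel hm.ne', rpow_one]
    have hderiv : deriv u =ᶠ[𝓝 r] fun s =>
        -radialFlux n (m / (n - 1) * α) (m / (n - 1) * β) (fun s => u s ^ (1 / m)) s := by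
      filter_upwards [Ioi_mem_nhds hr] with s hs using ((h (s + 1)).hasDerivAt hp (hmem hs)).deriv
    have hg' := (h (r + 1)).hasDerivAt_rpow hp (hmem hr)
    rw [hvm.deriv.deriv_eq, hvm.deriv_eq, hderiv.deriv_eq,
      (hasDerivAt_radialFlux (by omega) hg hr hg').fun_neg.deriv, hderiv.eq_of_nhds, hg'.deriv]
    have hr0 : r ≠ 0 := ne_of_gt hr
    field_simp
    ring

lemma IsRadialSol.isProfile (h : IsRadialSol n m α β η v) (hn : 2 ≤ n) (hm : 0 < m) (T : ℝ) :
    IsProfile n (1 / m) (m / (n - 1) * α) (m / (n - 1) * β) (η ^ m) T fun r => v |r| ^ m := by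
  obtain ⟨hpos, hv, hv2, -, hv0, hode⟩ := h
  have hn1 : (n : ℝ) - 1 ≠ 0 := by
    have : (2 : ℝ) ≤ n := by exact_mod_cast hn
    linarith
  have hg : Continuous fun r => v |r| := hv.comp_continuous continuous_abs fun r => abs_nonneg r
  have hgp : (fun s => (v |s| ^ m) ^ (1 / m)) = fun s => v |s| := by
    funext s
    rw [← rpow_mul (hpos _ (abs_nonneg s)).le, mul_one_div_cancel hm.ne', rpow_one]
  have hv_rpow : ContDiffOn ℝ 2 (fun s => v s ^ m) (Ioi 0) :=
    hv2.rpow_const_of_ne fun s hs => (hpos s (Ioi_subset_Ici_self hs)).ne'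
  have hv' (r : ℝ) (hr : 0 < r) : HasDerivAt v (deriv v r) r :=
    ((hv2.differentiableOn two_ne_zero).differentiableAt (Ioi_mem_nhds hr)).hasDerivAt
  have hw' (r : ℝ) (hr : 0 < r) :
      HasDerivAt (fun s => v s ^ m) (deriv (fun s => v s ^ m) r) r :=
    ((hv_rpow.differentiableOn two_ne_zero).differentiableAt (Ioi_mem_nhds hr)).hasDerivAt
  have hw'' (r : ℝ) (hr : 0 < r) :
      HasDerivAt (deriv fun s => v s ^ m) (deriv (deriv fun s => v s ^ m) r) r := by
    have := ((contDiffOn_succ_iff_deriv_of_isOpen (n := 1) isOpen_Ioi).1 hv_rpow).2.2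
    exact ((this.differentiableOn one_ne_zero).differentiableAt (Ioi_mem_nhds hr)).hasDerivAt
  have hg' (r : ℝ) (hr : 0 < r) : HasDerivAt (fun s => v |s|) (deriv v r) r := by
    refine (hv' r hr).congr_of_eventuallyEq ?_
    filter_upwards [Ioi_mem_nhds hr] with s hs
    rw [abs_of_pos hs]
  refine ⟨hg.rpow_const fun _ => Or.inr hm.le, fun r _ => rpow_pos_of_pos (hpos _ (abs_nonneg r)) _,
    fun r hr => ?_⟩
  rw [hgp, abs_of_nonneg hr.1, ← hv0]
  refine eq_sub_radialPotential_of_ode hn (hv.rpow_const fun _ _ => Or.inr hm.le) hg hw' hw'' hg'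
    (fun s hs => ?_) hr.1
  have hs_ode := congrArg (m / (n - 1) * ·) (hode s hs)
  rw [abs_of_pos hs]
  field_simp at hs_ode ⊢
  linarith

end RadialEquation

lemma IsProfile.deriv_sq_mul_rpow_pos {n : ℕ} {p α β c T r : ℝ} {u : ℝ → ℝ}
    (h : IsProfile n p α β c T u) (hn : n ≠ 0) (hp : 0 < p) (hβ : 0 < β) (hα : α ≠ 0)
    (hαβ : α ≤ β * p * (n - 2)) (hr : r ∈ Ioo 0 T) :
    0 < deriv (fun s => s ^ 2 * (u s ^ p) ^ (2 * (β / α))) r := by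
  have hr0 := hr.1
  have hr' : r ∈ Ico 0 T := Ioo_subset_Ico_self hr
  have hV : 0 < u r ^ p := rpow_pos_of_pos (h.pos r hr') p
  have hdrift : 0 < α * (u r ^ (p - 1) * selfSimilarRate n p α β u r) := by
    rw [mul_left_comm]
    exact mul_pos (rpow_pos_of_pos (h.pos r hr') _)
      (h.mul_selfSimilarRate_pos hn hp hβ hα hαβ hr)
  have hsplit : (u r ^ p) ^ (2 * (β / α)) = (u r ^ p) ^ (2 * (β / α) - 1) * u r ^ p := by
    rw [← rpow_add_one hV.ne', sub_add_cancel]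
  have hderiv : HasDerivAt (fun s => s ^ 2 * (u s ^ p) ^ (2 * (β / α)))
      (2 * r * (u r ^ p) ^ (2 * (β / α) - 1) / α ^ 2
        * (α * (u r ^ (p - 1) * selfSimilarRate n p α β u r))) r := by
    refine ((hasDerivAt_pow 2 r).mul
      ((h.hasDerivAt_rpow hp hr).rpow_const (Or.inl hV.ne'))).congr_deriv ?_
    rw [hsplit, ← h.drift_eq hr']
    field_simp
    ring
  rw [hderiv.deriv]
  exact mul_pos (by positivity) hdrift

theorem stmt1_general (n : ℕ) (hn : 2 ≤ n) (m α β η : ℝ) (hη : 0 < η) (hm : 0 < m)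
    (hβ : 0 < β) (hαβ : α ≤ β * ((n : ℝ) - 2) / m) :
    ∃ v : ℝ → ℝ, IsRadialSol n m α β η v ∧
      (∀ v' : ℝ → ℝ, IsRadialSol n m α β η v' → Set.EqOn v' v (Set.Ici (0:ℝ))) ∧
      (α ≠ 0 → ∀ r : ℝ, 0 < r →
        0 < deriv (fun s : ℝ => s ^ 2 * v s ^ (2 * (β / α))) r) := by
  have hn0 : n ≠ 0 := by omega
  have hp : 0 < 1 / m := one_div_pos.2 hm
  have hκ : 0 < m / ((n : ℝ) - 1) := div_pos hm (sub_pos.2 (Nat.one_lt_cast.2 hn))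
  have hβ' := mul_pos hκ hβ
  have hαβ' : m / (n - 1) * α ≤ m / (n - 1) * β * (1 / m) * (n - 2) :=
    (mul_le_mul_of_nonneg_left hαβ hκ.le).trans_eq (by ring)
  obtain ⟨u, hu⟩ := exists_forall_isProfile hn0 hp hβ' (rpow_pos_of_pos hη m) hαβ'
  refine ⟨fun r => u r ^ (1 / m), isRadialSol_of_isProfile hn hη hm hu, ?_, ?_⟩
  · intro v hv r hr
    have hvu : v |r| ^ m = u r := (hv.isProfile hn hm (r + 1)).eqOn_Icc (hu (r + 1))
      (add_pos_of_nonneg_of_pos hr one_pos) ⟨hr, (lt_add_one r).le⟩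
    simp only [← hvu, abs_of_nonneg (mem_Ici.1 hr), ← rpow_mul (hv.1 r hr).le,
      mul_one_div_cancel hm.ne', rpow_one]
  · intro hα r hr
    have hpos := (hu (r + 1)).deriv_sq_mul_rpow_pos hn0 hp hβ' (mul_ne_zero hκ.ne' hα) hαβ'
      ⟨hr, lt_add_one r⟩
    rwa [mul_div_mul_left _ _ hκ.ne'] at hpos

theorem stmt1 (n : ℕ) (hn : 3 ≤ n) (m α β η : ℝ) (hη : 0 < η)
    (hm : 0 < m) (hm' : m ≤ ((n : ℝ) - 2) / n)
    (hβ : 0 < β) (hαβ : α ≤ β * ((n : ℝ) - 2) / m) :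
    ∃ v : ℝ → ℝ, IsRadialSol n m α β η v ∧
      (∀ v' : ℝ → ℝ, IsRadialSol n m α β η v' → Set.EqOn v' v (Set.Ici (0:ℝ))) ∧
      (α ≠ 0 → ∀ r : ℝ, 0 < r →
        0 < deriv (fun s : ℝ => s ^ 2 * v s ^ (2 * (β / α))) r) :=
  stmt1_general n (by omega) m α β η hη hm hβ hαβ
end

section
/- Let n ≥ 3 be an integer, let η > 0, and let m, α, β satisfy 0 < m ≤ (n−2)/n and 2β/(1−m) ≥ α > 0. Let v be a radial solution of (E) on [0,∞). Then h(r) = v(r) + ((1−m)/2)·r·v'(r) > 0 for all r ≥ 0, and the function w(r) = r²·v(r)^{1−m} satisfies w'(r) > 0 for all r > 0. -/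
open Real Set

/-!
With `k = N - 2/(1-m)`, the radial equation with diffusion constant `c` turns into a first-order
linear equation for `h = v + ((1-m)/2) r v'`,
`h' + (k/r + (β/c) r v^(1-m) - (1-m) v'/v) h = (k/r + ((2β - α(1-m))/(2c)) r v^(1-m)) v`,
whose right-hand side is nonnegative since `α(1-m) ≤ 2β` and `m ≤ (N-2)/N`, that is, `k ≥ 0`. An
integrating factor shows that `h` stays positive once it is positive somewhere. Positive values of
`h` occur arbitrarily close to `0` by the mean value theorem: `w = r² v^(1-m)` vanishes at `0`, is
positive afterwards, and `w' = 2 r v^(-m) h`.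
-/

open scoped Topology

/-- Positive solutions on `[0, R)`, `R ∈ [-∞, ∞]`, of the radial equation
`(c/m)·((v^m)'' + ((N-1)/r)(v^m)') + α v + β r v' = 0` in real dimension `N`, with an arbitrary
diffusion constant `c`. The value and slope at the origin are left free, and `v` is only asked to
be twice differentiable. -/
structure IsRadialSolOn (c N m α β : ℝ) (R : EReal) (v : ℝ → ℝ) : Prop where
  pos : ∀ r : ℝ, 0 ≤ r → r < R → 0 < v r
  continuousWithinAt_zero : ContinuousWithinAt v (Ici 0) 0
  differentiableAt : ∀ r : ℝ, 0 < r → r < R → DifferentiableAt ℝ v r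
  differentiableAt_deriv : ∀ r : ℝ, 0 < r → r < R → DifferentiableAt ℝ (deriv v) r
  ode : ∀ r : ℝ, 0 < r → r < R →
    c / m * (deriv (deriv fun s => v s ^ m) r + (N - 1) / r * deriv (fun s => v s ^ m) r)
      + α * v r + β * r * deriv v r = 0

/-- The function `h = v + ((1-m)/2) r v'`. Up to the factor `2/(1-m)` it is the derivative at
`l = 1` of the rescaling `l ^ (2/(1-m)) * v (l * r)`. -/
noncomputable def scalingDeriv (m : ℝ) (v : ℝ → ℝ) (r : ℝ) : ℝ :=
  v r + (1 - m) / 2 * r * deriv v r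

/-- The zeroth-order coefficient in the first-order linear equation satisfied by
`scalingDeriv m v` when `v` is a radial solution. -/
noncomputable def scalingDamping (c N m β : ℝ) (v : ℝ → ℝ) (r : ℝ) : ℝ :=
  (N - 2 / (1 - m)) / r + β / c * r * v r ^ (1 - m) - (1 - m) * deriv v r / v r

theorem pos_of_deriv_add_mul_nonneg_s3 {f B : ℝ → ℝ} {a b : ℝ} (hab : a ≤ b)
    (hf : ContinuousOn f (Icc a b)) (hf' : DifferentiableOn ℝ f (Ioo a b))
    (hB : ContinuousOn B (Icc a b)) (hfB : ∀ t ∈ Ioo a b, 0 ≤ deriv f t + B t * f t)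
    (ha : 0 < f a) : 0 < f b := by
  let E : ℝ → ℝ := fun t => exp (∫ s in a..t, B s)
  have hBi : IntervalIntegrable B MeasureTheory.volume a b := hB.intervalIntegrable_of_Icc hab
  have hE : ContinuousOn E (Icc a b) := by
    rw [← uIcc_of_le hab]
    exact (intervalIntegral.continuousOn_primitive_interval' hBi left_mem_uIcc).rexp
  have hE' : ∀ t ∈ Ioo a b, HasDerivAt E (E t * B t) t := fun t ht =>
    (intervalIntegral.integral_hasDerivAt_right
      ((hB.mono (Icc_subset_Icc_right ht.2.le)).intervalIntegrable_of_Icc ht.1.le)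
      ((hB.mono Ioo_subset_Icc_self).stronglyMeasurableAtFilter isOpen_Ioo t ht)
      (hB.continuousAt (Icc_mem_nhds ht.1 ht.2))).exp
  have hEf' : ∀ t ∈ Ioo a b, HasDerivAt (E * f) (E t * B t * f t + E t * deriv f t) t :=
    fun t ht => (hE' t ht).mul (hf'.differentiableAt (isOpen_Ioo.mem_nhds ht)).hasDerivAt
  have hmono : MonotoneOn (E * f) (Icc a b) := by
    refine monotoneOn_of_hasDerivWithinAt_nonneg (convex_Icc a b) (hE.mul hf)
      (fun t ht => (hEf' t (interior_Icc (a := a) ▸ ht)).hasDerivWithinAt) fun t ht => ?_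
    rw [interior_Icc] at ht
    linarith [mul_nonneg (exp_pos (∫ s in a..t, B s)).le (hfB t ht)]
  have hEfa : 0 < (E * f) a := mul_pos (exp_pos _) ha
  exact pos_of_mul_pos_right
    (hEfa.trans_le (hmono (left_mem_Icc.2 hab) (right_mem_Icc.2 hab) hab)) (exp_pos _).le

theorem hasDerivAt_sq_mul_rpow {m r : ℝ} {v : ℝ → ℝ} (hv : DifferentiableAt ℝ v r)
    (hvr : 0 < v r) :
    HasDerivAt (fun s : ℝ => s ^ 2 * v s ^ (1 - m))
      (2 * r * v r ^ (-m) * scalingDeriv m v r) r := by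
  refine ((hasDerivAt_pow 2 r).mul (hv.hasDerivAt.rpow_const (.inl hvr.ne'))).congr_deriv ?_
  have hexp : v r ^ (1 - m) = v r * v r ^ (-m) := by
    rw [sub_eq_add_neg, rpow_add hvr, rpow_one]
  rw [hexp, show 1 - m - 1 = -m by ring, scalingDeriv]
  push_cast
  ring

theorem hasDerivAt_scalingDeriv {m r : ℝ} {v : ℝ → ℝ} (hv : DifferentiableAt ℝ v r)
    (hv' : DifferentiableAt ℝ (deriv v) r) :
    HasDerivAt (scalingDeriv m v)
      (deriv v r + (1 - m) / 2 * (deriv v r + r * deriv (deriv v) r)) r := by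
  refine (hv.hasDerivAt.add
    (((hasDerivAt_id r).const_mul ((1 - m) / 2)).mul hv'.hasDerivAt)).congr_deriv ?_
  simp only [id_eq]
  ring

theorem deriv_deriv_rpow {m r : ℝ} {v : ℝ → ℝ} (hv : ∀ᶠ s in 𝓝 r, DifferentiableAt ℝ v s)
    (hv' : DifferentiableAt ℝ (deriv v) r) (hvr : 0 < v r) :
    deriv (deriv fun s => v s ^ m) r =
      m * v r ^ (m - 1) * (deriv (deriv v) r + (m - 1) * deriv v r ^ 2 / v r) := by
  have hvd : HasDerivAt v (deriv v r) r := hv.self_of_nhds.hasDerivAt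
  have hderiv : (deriv fun s => v s ^ m) =ᶠ[𝓝 r] fun s => deriv v s * m * v s ^ (m - 1) := by
    filter_upwards [hv, hvd.continuousAt.eventually_ne hvr.ne'] with s hs hs0
    exact (hs.hasDerivAt.rpow_const (.inl hs0)).deriv
  have hderiv' : deriv (fun s => deriv v s * m * v s ^ (m - 1)) r =
      deriv (deriv v) r * m * v r ^ (m - 1)
        + deriv v r * m * (deriv v r * (m - 1) * v r ^ (m - 1 - 1)) :=
    ((hv'.hasDerivAt.mul_const m).mul (hvd.rpow_const (.inl hvr.ne'))).deriv
  rw [hderiv.deriv_eq, hderiv', rpow_sub_one hvr.ne' (m - 1)]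
  ring

namespace IsRadialSolOn

variable {c N m α β r : ℝ} {R : EReal} {v : ℝ → ℝ}

theorem eventually_differentiableAt (hv : IsRadialSolOn c N m α β R v) (hr : 0 < r) (hrR : r < R) :
    ∀ᶠ s in 𝓝 r, DifferentiableAt ℝ v s := by
  filter_upwards [eventually_gt_nhds hr,
    continuous_coe_real_ereal.continuousAt.eventually_lt_const hrR] with s hs hsR
  exact hv.differentiableAt s hs hsR

theorem continuousOn_Icc (hv : IsRadialSolOn c N m α β R v) (hrR : r < R) :
    ContinuousOn v (Icc 0 r) := by
  rintro s ⟨hs, hsr⟩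
  rcases hs.eq_or_lt with rfl | hs
  · exact hv.continuousWithinAt_zero.mono Icc_subset_Ici_self
  · exact (hv.differentiableAt s hs
      ((EReal.coe_le_coe hsr).trans_lt hrR)).continuousAt.continuousWithinAt

theorem deriv_deriv_eq (hv : IsRadialSolOn c N m α β R v) (hc : c ≠ 0) (hm : m ≠ 0)
    (hr : 0 < r) (hrR : r < R) :
    deriv (deriv v) r = (1 - m) * deriv v r ^ 2 / v r - (N - 1) / r * deriv v r
      - v r ^ (1 - m) / c * (α * v r + β * r * deriv v r) := by
  have hvr : 0 < v r := hv.pos r hr.le hrR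
  have hode := hv.ode r hr hrR
  rw [deriv_deriv_rpow (hv.eventually_differentiableAt hr hrR)
      (hv.differentiableAt_deriv r hr hrR) hvr,
    ((hv.differentiableAt r hr hrR).hasDerivAt.rpow_const (.inl hvr.ne')).deriv] at hode
  rw [← neg_sub m 1, rpow_neg hvr.le]
  field_simp at hode ⊢
  linear_combination hode

theorem deriv_scalingDeriv_add (hv : IsRadialSolOn c N m α β R v) (hc : c ≠ 0) (hm : m ≠ 0)
    (hm1 : m ≠ 1) (hr : 0 < r) (hrR : r < R) :
    deriv (scalingDeriv m v) r + scalingDamping c N m β v r * scalingDeriv m v r =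
      ((N - 2 / (1 - m)) / r + (2 * β - α * (1 - m)) / (2 * c) * r * v r ^ (1 - m)) * v r := by
  have hvr : v r ≠ 0 := (hv.pos r hr.le hrR).ne'
  have hm1' : 1 - m ≠ 0 := sub_ne_zero.2 hm1.symm
  rw [(hasDerivAt_scalingDeriv (hv.differentiableAt r hr hrR)
      (hv.differentiableAt_deriv r hr hrR)).deriv,
    hv.deriv_deriv_eq hc hm hr hrR, scalingDamping, scalingDeriv]
  field_simp
  ring

theorem continuousAt_scalingDamping (hv : IsRadialSolOn c N m α β R v) (hr : 0 < r)
    (hrR : r < R) : ContinuousAt (scalingDamping c N m β v) r := by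
  have hvr : v r ≠ 0 := (hv.pos r hr.le hrR).ne'
  have hcont : ContinuousAt v r := (hv.differentiableAt r hr hrR).continuousAt
  have hcont' : ContinuousAt (deriv v) r := (hv.differentiableAt_deriv r hr hrR).continuousAt
  exact ((continuousAt_const.div continuousAt_id hr.ne').add
    ((continuousAt_const.mul continuousAt_id).mul (hcont.rpow_const (.inl hvr)))).sub
    ((continuousAt_const.mul hcont').div hcont hvr)

theorem exists_scalingDeriv_pos (hv : IsRadialSolOn c N m α β R v) (hr : 0 < r) (hrR : r < R) :
    ∃ a ∈ Ioo 0 r, 0 < scalingDeriv m v a := by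
  have hpos : ∀ s ∈ Icc 0 r, 0 < v s := fun s hs =>
    hv.pos s hs.1 ((EReal.coe_le_coe hs.2).trans_lt hrR)
  have hcont : ContinuousOn (fun s : ℝ => s ^ 2 * v s ^ (1 - m)) (Icc 0 r) :=
    (continuousOn_id.pow 2).mul
      ((hv.continuousOn_Icc hrR).rpow_const fun s hs => .inl (hpos s hs).ne')
  obtain ⟨a, ha, hslope⟩ := exists_hasDerivAt_eq_slope _ _ hr hcont fun s hs =>
    hasDerivAt_sq_mul_rpow (hv.differentiableAt s hs.1 ((EReal.coe_lt_coe hs.2).trans hrR))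
      (hpos s (Ioo_subset_Icc_self hs))
  have hslope_pos : 0 < (r ^ 2 * v r ^ (1 - m) - 0 ^ 2 * v 0 ^ (1 - m)) / (r - 0) := by
    have := rpow_pos_of_pos (hpos r (right_mem_Icc.2 hr.le)) (1 - m)
    rw [zero_pow two_ne_zero, zero_mul, sub_zero, sub_zero]
    positivity
  have hfactor : 0 ≤ 2 * a * v a ^ (-m) :=
    mul_nonneg (mul_nonneg zero_le_two ha.1.le)
      (rpow_nonneg (hpos a (Ioo_subset_Icc_self ha)).le _)
  exact ⟨a, ha, pos_of_mul_pos_right (hslope ▸ hslope_pos) hfactor⟩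

theorem scalingDeriv_pos (hv : IsRadialSolOn c N m α β R v) (hc : 0 < c) (hm : m ≠ 0)
    (hm1 : m < 1) (hN : 2 / (1 - m) ≤ N) (hαβ : α * (1 - m) ≤ 2 * β)
    (hr : 0 < r) (hrR : r < R) : 0 < scalingDeriv m v r := by
  obtain ⟨a, ⟨ha, har⟩, hpos⟩ := hv.exists_scalingDeriv_pos hr hrR
  have hlt : ∀ s ∈ Icc a r, 0 < s ∧ (s : EReal) < R := fun s hs =>
    ⟨ha.trans_le hs.1, (EReal.coe_le_coe hs.2).trans_lt hrR⟩
  have hdiff : ∀ s ∈ Icc a r, DifferentiableAt ℝ (scalingDeriv m v) s := fun s hs =>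
    (hasDerivAt_scalingDeriv (hv.differentiableAt s (hlt s hs).1 (hlt s hs).2)
      (hv.differentiableAt_deriv s (hlt s hs).1 (hlt s hs).2)).differentiableAt
  refine pos_of_deriv_add_mul_nonneg_s3 (B := scalingDamping c N m β v) har.le
    (fun s hs => (hdiff s hs).continuousAt.continuousWithinAt)
    (fun s hs => (hdiff s (Ioo_subset_Icc_self hs)).differentiableWithinAt)
    (fun s hs => (hv.continuousAt_scalingDamping (hlt s hs).1 (hlt s hs).2).continuousWithinAt)
    (fun s hs => ?_) hpos
  obtain ⟨hs0, hsR⟩ := hlt s (Ioo_subset_Icc_self hs)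
  have hvs : 0 < v s := hv.pos s hs0.le hsR
  rw [hv.deriv_scalingDeriv_add hc.ne' hm hm1.ne hs0 hsR]
  have hdim : 0 ≤ (N - 2 / (1 - m)) / s := div_nonneg (sub_nonneg.2 hN) hs0.le
  have hcoeff : 0 ≤ (2 * β - α * (1 - m)) / (2 * c) :=
    div_nonneg (sub_nonneg.2 hαβ) (mul_pos two_pos hc).le
  exact mul_nonneg (add_nonneg hdim (mul_nonneg (mul_nonneg hcoeff hs0.le)
    (rpow_nonneg hvs.le _))) hvs.le

end IsRadialSolOn

theorem IsRadialSol.isRadialSolOn {n : ℕ} {m α β η : ℝ} {v : ℝ → ℝ}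
    (hv : IsRadialSol n m α β η v) : IsRadialSolOn (n - 1) n m α β ⊤ v where
  pos r hr _ := hv.1 r hr
  continuousWithinAt_zero := hv.2.1 0 self_mem_Ici
  differentiableAt _ hr _ :=
    (hv.2.2.1.differentiableOn two_ne_zero).differentiableAt (Ioi_mem_nhds hr)
  differentiableAt_deriv _ hr _ :=
    ((hv.2.2.1.deriv_of_isOpen (m := 1) isOpen_Ioi one_add_one_eq_two.le).differentiableOn
      one_ne_zero).differentiableAt (Ioi_mem_nhds hr)
  ode r hr _ := hv.2.2.2.2.2 r hr

theorem stmt3_general {c N m α β : ℝ} {R : EReal} {v : ℝ → ℝ} (hc : 0 < c) (hN : 0 < N)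
    (hm : m ≠ 0) (hm' : m ≤ (N - 2) / N) (hαβ : α ≤ 2 * β / (1 - m))
    (hv : IsRadialSolOn c N m α β R v) :
    (∀ r : ℝ, 0 ≤ r → r < R → 0 < v r + ((1 - m) / 2) * r * deriv v r) ∧
    (∀ r : ℝ, 0 < r → r < R → 0 < deriv (fun s : ℝ => s ^ 2 * v s ^ (1 - m)) r) := by
  have hmN : m * N ≤ N - 2 := (le_div_iff₀ hN).1 hm'
  have hm1 : m < 1 := lt_of_mul_lt_mul_right (by linarith) hN.le
  have hm1' : 0 < 1 - m := sub_pos.2 hm1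
  have hcrit : 2 / (1 - m) ≤ N := (div_le_iff₀ hm1').2 (by linarith)
  have hpos : ∀ r : ℝ, 0 < r → r < R → 0 < scalingDeriv m v r := fun r =>
    hv.scalingDeriv_pos hc hm hm1 hcrit ((le_div_iff₀ hm1').1 hαβ)
  refine ⟨fun r hr hrR => ?_, fun r hr hrR => ?_⟩
  · rcases hr.eq_or_lt with rfl | hr
    · simpa only [mul_zero, zero_mul, add_zero] using hv.pos 0 le_rfl hrR
    · exact hpos r hr hrR
  · have hvr : 0 < v r := hv.pos r hr.le hrR
    rw [(hasDerivAt_sq_mul_rpow (hv.differentiableAt r hr hrR) hvr).deriv]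
    exact mul_pos (mul_pos (mul_pos two_pos hr) (rpow_pos_of_pos hvr _)) (hpos r hr hrR)

theorem stmt3 (n : ℕ) (hn : 3 ≤ n) (m α β η : ℝ) (hη : 0 < η)
    (hm : 0 < m) (hm' : m ≤ ((n : ℝ) - 2) / n)
    (hα : 0 < α) (hαβ : α ≤ 2 * β / (1 - m))
    (v : ℝ → ℝ) (hv : IsRadialSol n m α β η v) :
    (∀ r : ℝ, 0 ≤ r → 0 < v r + ((1 - m) / 2) * r * deriv v r) ∧
    (∀ r : ℝ, 0 < r → 0 < deriv (fun s : ℝ => s ^ 2 * v s ^ (1 - m)) r) := by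
  have hn' : (3 : ℝ) ≤ n := by exact_mod_cast hn
  have hgen := stmt3_general (by linarith) (by linarith) hm.ne' hm' hαβ hv.isRadialSolOn
  exact ⟨fun r hr => hgen.1 r hr (EReal.coe_lt_top r), fun r hr => hgen.2 r hr (EReal.coe_lt_top r)⟩
end
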